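/- Let v > 0 and q ∈ ℝ with v − q ≥ 0 and v + q ≥ 0, let W be a d×d real symmetric positive definite matrix and R a d×d real symmetric matrix with both W − R and W + R positive semidefinite. Set ξ = v⁻¹(R − q·v⁻¹·W), A(t) = v⁻¹W + tI, and ρ(t) = A(t)^{−1/2} ξ A(t)^{−1/2} for t ≥ 0. Let α ≥ 0 be a real number and ν a Borel measure on [0,∞) such that the functions t ↦ t²·tr(ρ(t)²) and t ↦ t²·tr(ρ(t)³) are ν-integrable, and define D₂ = α·tr(ξ²) + ∫₀^∞ t²·tr(ρ(t)²) dν(t) and D₃ = −2·∫₀^∞ t²·tr(ρ(t)³) dν(t). Then 3(v − q)·D₂ + v·D₃ ≥ 0. -/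

import Mathlib

open Matrix
open scoped Classical

/-- The positive semidefinite square root of a positive semidefinite matrix (the definition of the
older Mathlib, which has since been removed), over `ℝ`. -/
noncomputable def Matrix.PosSemidef.sqrt {n : Type*} [Fintype n] [DecidableEq n]
    {A : Matrix n n ℝ} (hA : A.PosSemidef) : Matrix n n ℝ :=
  hA.1.eigenvectorUnitary.1 * diagonal (Real.sqrt ∘ hA.1.eigenvalues) *
    (star hA.1.eigenvectorUnitary : Matrix n n ℝ)

/-- `A^(-1/2)`: the inverse of the unique positive semidefinite square root of `A`
(junk value `0` if `A` is not positive semidefinite). -/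
noncomputable def invSqrt {d : ℕ} (A : Matrix (Fin d) (Fin d) ℝ) : Matrix (Fin d) (Fin d) ℝ :=
  if h : A.PosSemidef then h.sqrt⁻¹ else 0

theorem aux_invSqrt {d : ℕ} (A : Matrix (Fin d) (Fin d) ℝ) (hA : A.PosDef) :
    (invSqrt A)ᴴ = invSqrt A ∧ invSqrt A * A * invSqrt A = 1 := by
  have h : A.PosSemidef := hA.posSemidef
  have e : invSqrt A = h.sqrt⁻¹ := by simp [invSqrt, h]
  have hB : h.sqrtᴴ = h.sqrt := by
    unfold Matrix.PosSemidef.sqrt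
    simp [Matrix.conjTranspose_mul, Matrix.mul_assoc, Matrix.star_eq_conjTranspose]
  have hU : (star h.1.eigenvectorUnitary : Matrix (Fin d) (Fin d) ℝ) * h.1.eigenvectorUnitary.1 = 1 :=
    Unitary.coe_star_mul_self h.1.eigenvectorUnitary
  have hD : diagonal (Real.sqrt ∘ h.1.eigenvalues) * diagonal (Real.sqrt ∘ h.1.eigenvalues)
      = diagonal h.1.eigenvalues := by
    rw [Matrix.diagonal_mul_diagonal]
    congr 1
    funext i
    exact Real.mul_self_sqrt (h.eigenvalues_nonneg i)
  have hsp : A = h.1.eigenvectorUnitary.1 * diagonal h.1.eigenvalues *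
      (star h.1.eigenvectorUnitary : Matrix (Fin d) (Fin d) ℝ) := by
    have := h.1.spectral_theorem
    rw [Unitary.conjStarAlgAut_apply] at this
    exact this
  have hBB : h.sqrt * h.sqrt = A := by
    conv_rhs => rw [hsp]
    unfold Matrix.PosSemidef.sqrt
    rw [← hD]
    simp only [Matrix.mul_assoc]
    rw [← Matrix.mul_assoc (star h.1.eigenvectorUnitary : Matrix (Fin d) (Fin d) ℝ) h.1.eigenvectorUnitary.1, hU,
      Matrix.one_mul]
  have hdet : IsUnit h.sqrt.det := by
    have h1 : h.sqrt.det * h.sqrt.det = A.det := by rw [← Matrix.det_mul, hBB]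
    have h2 := hA.det_pos
    refine isUnit_iff_ne_zero.mpr fun h0 => ?_
    rw [h0] at h1
    simp at h1
    linarith
  rw [e]
  refine ⟨by rw [Matrix.conjTranspose_nonsing_inv, hB], ?_⟩
  have hm : h.sqrt⁻¹ * A * h.sqrt⁻¹ = h.sqrt⁻¹ * (h.sqrt * h.sqrt) * h.sqrt⁻¹ :=
    congrArg (fun X => h.sqrt⁻¹ * X * h.sqrt⁻¹) hBB.symm
  rw [hm]
  rw [← Matrix.mul_assoc, Matrix.nonsing_inv_mul _ hdet, Matrix.one_mul,
    Matrix.mul_nonsing_inv _ hdet]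

theorem aux_trace {d : ℕ} (c : ℝ) (A ξ S : Matrix (Fin d) (Fin d) ℝ) (hS : Sᴴ = S)
    (hSA : S * A * S = 1) (hξ : ξᴴ = ξ) (h : (c • A - ξ).PosSemidef) :
    0 ≤ (S * ξ * S * (S * ξ * S)).trace ∧
    (S * ξ * S * (S * ξ * S) * (S * ξ * S)).trace ≤ c * (S * ξ * S * (S * ξ * S)).trace := by
  have h1 : (c • (1 : Matrix (Fin d) (Fin d) ℝ) - S * ξ * S).PosSemidef := by
    have := h.mul_mul_conjTranspose_same S
    rw [hS, Matrix.mul_sub, Matrix.sub_mul, Matrix.mul_smul, Matrix.smul_mul, hSA] at this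
    exact this
  have hr : (S * ξ * S)ᴴ = S * ξ * S := by
    simp only [Matrix.conjTranspose_mul, hS, hξ, Matrix.mul_assoc]
  generalize S * ξ * S = r at *
  constructor
  · have := (Matrix.posSemidef_self_mul_conjTranspose r).trace_nonneg
    rwa [hr] at this
  · have := (h1.mul_mul_conjTranspose_same r).trace_nonneg
    rw [hr, Matrix.mul_sub, Matrix.sub_mul, Matrix.mul_smul, Matrix.smul_mul, Matrix.mul_one,
      Matrix.trace_sub, Matrix.trace_smul, smul_eq_mul] at this
    linarith

open MeasureTheory in
/-- The compatibility inequality `3(v - q) D₂ + v D₃ ≥ 0`, where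
`D₂ = α tr(ξ²) + ∫₀^∞ t² tr(ρ(t)²) dν(t)` and `D₃ = -2 ∫₀^∞ t² tr(ρ(t)³) dν(t)`. -/
theorem compatibility_inequality {d : ℕ} (v q α : ℝ) (W R : Matrix (Fin d) (Fin d) ℝ)
    (ν : Measure ℝ)
    (hv : 0 < v) (hvq : 0 ≤ v - q) (hvq' : 0 ≤ v + q)
    (hW : W.PosDef) (hR : R.IsSymm)
    (hWR : (W - R).PosSemidef) (hWR' : (W + R).PosSemidef) (hα : 0 ≤ α) :
    let ξ : Matrix (Fin d) (Fin d) ℝ := v⁻¹ • (R - (q * v⁻¹) • W)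
    let ρ : ℝ → Matrix (Fin d) (Fin d) ℝ :=
      fun t => invSqrt (v⁻¹ • W + t • 1) * ξ * invSqrt (v⁻¹ • W + t • 1)
    ∀ (_ : IntegrableOn (fun t => t ^ 2 * (ρ t * ρ t).trace) (Set.Ici (0 : ℝ)) ν)
      (_ : IntegrableOn (fun t => t ^ 2 * (ρ t * ρ t * ρ t).trace) (Set.Ici (0 : ℝ)) ν),
    let D₂ : ℝ := α * (ξ * ξ).trace + ∫ t in Set.Ici (0 : ℝ), t ^ 2 * (ρ t * ρ t).trace ∂ν
    let D₃ : ℝ := -2 * ∫ t in Set.Ici (0 : ℝ), t ^ 2 * (ρ t * ρ t * ρ t).trace ∂ν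
    0 ≤ 3 * (v - q) * D₂ + v * D₃ := by
  intro ξ ρ h2 h3 D₂ D₃
  have hRh : Rᴴ = R := by rw [Matrix.conjTranspose_eq_transpose_of_trivial]; exact hR
  have hξ : ξᴴ = ξ := by
    simp only [ξ, Matrix.conjTranspose_smul, Matrix.conjTranspose_sub, hRh, hW.1.eq, star_trivial]
  have hvi : 0 < v⁻¹ := inv_pos.mpr hv
  have hc : 0 ≤ (v - q) * v⁻¹ := mul_nonneg hvq hvi.le
  have hvc : v * ((v - q) * v⁻¹) = v - q := by field_simp
  have key : ∀ t ∈ Set.Ici (0 : ℝ), 0 ≤ (ρ t * ρ t).trace ∧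
      (ρ t * ρ t * ρ t).trace ≤ ((v - q) * v⁻¹) * (ρ t * ρ t).trace := by
    intro t ht
    have hA : (v⁻¹ • W + t • (1 : Matrix (Fin d) (Fin d) ℝ)).PosDef :=
      (hW.smul hvi).add_posSemidef (Matrix.PosSemidef.one.smul ht)
    obtain ⟨hS, hSA⟩ := aux_invSqrt _ hA
    refine aux_trace _ _ ξ _ hS hSA hξ ?_
    have e : ((v - q) * v⁻¹) • (v⁻¹ • W + t • (1 : Matrix (Fin d) (Fin d) ℝ)) - ξ
        = v⁻¹ • (W - R) + (((v - q) * v⁻¹) * t) • (1 : Matrix (Fin d) (Fin d) ℝ) := by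
      ext i j
      simp only [ξ, Matrix.sub_apply, Matrix.add_apply, Matrix.smul_apply, smul_eq_mul]
      field_simp
      ring
    rw [e]
    exact (hWR.smul hvi.le).add (Matrix.PosSemidef.one.smul (mul_nonneg hc ht))
  have i2 : 0 ≤ ∫ t in Set.Ici (0 : ℝ), t ^ 2 * (ρ t * ρ t).trace ∂ν :=
    setIntegral_nonneg measurableSet_Ici fun t ht => mul_nonneg (sq_nonneg t) (key t ht).1
  have i3 : ∫ t in Set.Ici (0 : ℝ), t ^ 2 * (ρ t * ρ t * ρ t).trace ∂ν ≤
      ((v - q) * v⁻¹) * ∫ t in Set.Ici (0 : ℝ), t ^ 2 * (ρ t * ρ t).trace ∂ν := by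
    rw [← integral_const_mul]
    refine setIntegral_mono_on h3 (h2.const_mul _) measurableSet_Ici fun t ht => ?_
    have := mul_le_mul_of_nonneg_left (key t ht).2 (sq_nonneg t)
    linarith
  have i1 : 0 ≤ (ξ * ξ).trace := by
    have := (Matrix.posSemidef_self_mul_conjTranspose ξ).trace_nonneg
    rwa [hξ] at this
  have i4 := mul_le_mul_of_nonneg_left i3 hv.le
  rw [← mul_assoc, hvc] at i4
  have i5 := mul_nonneg hvq i2
  have i6 := mul_nonneg hvq (mul_nonneg hα i1)
  simp only [D₂, D₃]
  linarith
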